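/- arXiv:2507.00940 — 3 statements merged into one kernel-verified Lean document; each statement's English description precedes it below -/
import Mathlib

section
/- Let R be a commutative ring and M : Matrix (Fin k₁ ⊕ Fin k₂) (Fin l₁ ⊕ Fin l₂) R a matrix with k₁ + k₂ = l₁ + l₂ whose off-diagonal blocks vanish, i.e., M (Sum.inl i) (Sum.inr j) = 0 and M (Sum.inr i) (Sum.inl j) = 0 for all i, j. If k₁ ≠ l₁, then for every bijection e : (Fin k₁ ⊕ Fin k₂) ≃ (Fin l₁ ⊕ Fin l₂), the determinant of the square matrix (i, i′) ↦ M i (e i′) is zero. -/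
/-!
In the Leibniz expansion of the determinant, the term of a permutation `σ` is, up to sign,
`∏ i, M (σ i) (e i)`. If all its factors were nonzero, the bijection `σ i ↦ e i` from rows to
columns would preserve the block, which forces `k₁ = l₁`. Hence every term has a zero factor.
-/

/-- **Selection rule for minors of a block-structured matrix.**
If the off-diagonal blocks of `M : Matrix (Fin k₁ ⊕ Fin k₂) (Fin l₁ ⊕ Fin l₂) R` vanish and
`k₁ ≠ l₁`, then for every bijection `e` between the row and column index types, the
determinant of the square matrix `(i, i′) ↦ M i (e i′)` is zero. -/
theorem det_eq_zero_of_blocks_ne {R : Type*} [CommRing R] {k₁ k₂ l₁ l₂ : ℕ}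
    (M : Matrix (Fin k₁ ⊕ Fin k₂) (Fin l₁ ⊕ Fin l₂) R)
    (hsize : k₁ + k₂ = l₁ + l₂)
    (h₁ : ∀ (i : Fin k₁) (j : Fin l₂), M (Sum.inl i) (Sum.inr j) = 0)
    (h₂ : ∀ (i : Fin k₂) (j : Fin l₁), M (Sum.inr i) (Sum.inl j) = 0)
    (hne : k₁ ≠ l₁)
    (e : (Fin k₁ ⊕ Fin k₂) ≃ (Fin l₁ ⊕ Fin l₂)) :
    (Matrix.of fun i i' => M i (e i')).det = 0 := by
  rw [Matrix.det_apply]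
  refine Finset.sum_eq_zero fun σ _ => ?_
  suffices h : ∃ i, M (σ i) (e i) = 0 by
    obtain ⟨i, hi⟩ := h
    rw [Finset.prod_eq_zero (Finset.mem_univ i) (by simpa using hi), smul_zero]
  by_contra! hσ
  -- If no factor of the `σ`-term vanishes, `σ i` and `e i` always lie in blocks of the same index.
  have hblock : ∀ i, (e i).isLeft = (σ i).isLeft := by
    intro i
    have hi := hσ i
    rcases hr : σ i with a | a <;> rcases hc : e i with b | b <;> rw [hr, hc] at hi
    · rfl
    · exact absurd (h₁ a b) hi
    · exact absurd (h₂ a b) hi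
    · rfl
  -- Counting the `i` sent to the first block by `σ` and by `e` gives `k₁` and `l₁` respectively.
  have hcount : ∑ r, (if (σ r).isLeft then 1 else 0) = ∑ r, (if (e r).isLeft then 1 else 0) := by
    simp only [hblock]
  rw [Equiv.sum_comp σ (fun r => if r.isLeft then 1 else 0),
    Equiv.sum_comp e (fun c => if c.isLeft then 1 else 0),
    Fintype.sum_sum_type, Fintype.sum_sum_type] at hcount
  exact hne (by simpa using hcount)
end

section
/- Jacobi's complementary-minor identity: let K be a field, A : Matrix (Fin n) (Fin n) K an invertible matrix, 0 ≤ k ≤ n, and let I, J : Fin k → Fin n be strictly monotone maps with strictly monotone complementary enumerations Iᶜ, Jᶜ : Fin (n−k) → Fin n (enumerating, in increasing order, the indices not in the range of I, resp. J). Then det A · det ((A⁻¹).submatrix Jᶜ Iᶜ) = (−1)^{Σ_{a} I a + Σ_{a} J a} · det (A.submatrix I J), where the sums are over the natural-number values of the entries of I and J. -/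
/-!
Order the rows of `A` as `I` followed by `Iᶜ` and the columns as `J` followed by `Jᶜ`. This turns
`A` into a block matrix `M` whose upper left block is `A[I, J]`, and `M⁻¹` has lower right block
`A⁻¹[Jᶜ, Iᶜ]`. Replacing the left block column of `M⁻¹` by that of the identity gives a block
triangular matrix, whose product with `M` is again block triangular; comparing determinants yields
`det M * det A⁻¹[Jᶜ, Iᶜ] = det A[I, J]` (`det_mul_det_toBlocks₂₂`).

It remains to compare `det M` with `det A`. The shuffle of `Fin (k + m)` that lists `I` and then
`Iᶜ` has `I a - a` inversions starting at position `a < k` and none starting later, so its sign is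
`(-1) ^ ∑ a, (I a - a)` (`sign_shuffle`). The contributions `∑ a, a` of the row shuffle and of
the column shuffle cancel.
-/

open Equiv Matrix

/-- If `M * N = 1`, a leading minor of `M` is `det M` times the complementary minor of `N`. -/
lemma det_mul_det_toBlocks₂₂ {K p q : Type*} [CommRing K] [Fintype p] [Fintype q]
    [DecidableEq p] [DecidableEq q] (M N : Matrix (p ⊕ q) (p ⊕ q) K) (h : M * N = 1) :
    M.det * N.toBlocks₂₂.det = M.toBlocks₁₁.det := by
  have h' := h
  rw [← fromBlocks_toBlocks M, ← fromBlocks_toBlocks N, fromBlocks_multiply, ← fromBlocks_one,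
    fromBlocks_inj] at h'
  obtain ⟨-, h12, -, h22⟩ := h'
  have key : M * fromBlocks 1 N.toBlocks₁₂ 0 N.toBlocks₂₂
      = fromBlocks M.toBlocks₁₁ 0 M.toBlocks₂₁ 1 := by
    conv_lhs => rw [← fromBlocks_toBlocks M]
    rw [fromBlocks_multiply, h12, h22]
    simp
  have := congrArg det key
  rwa [det_mul, det_fromBlocks_zero₂₁, det_fromBlocks_zero₁₂, det_one, det_one, one_mul,
    mul_one] at this

/-- The `I a` indices below `I a` are the `a` earlier values of `I` and the values of `Ic`
below `I a`. -/
lemma card_filter_lt_add {n k m : ℕ} {I : Fin k → Fin n} {Ic : Fin m → Fin n}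
    (hI : StrictMono I) (hIc : StrictMono Ic)
    (hc : ∀ x : Fin n, x ∈ Set.range Ic ↔ x ∉ Set.range I) (a : Fin k) :
    (Finset.univ.filter fun c => Ic c < I a).card + (a : ℕ) = I a := by
  classical
  have hU : Finset.Iio (I a)
      = (Finset.univ.filter fun c => Ic c < I a).image Ic ∪ (Finset.Iio a).image I := by
    ext x
    simp only [Finset.mem_Iio, Finset.mem_union, Finset.mem_image, Finset.mem_filter,
      Finset.mem_univ, true_and]
    constructor
    · intro hx
      by_cases hr : x ∈ Set.range I
      · obtain ⟨b, rfl⟩ := hr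
        exact Or.inr ⟨b, hI.lt_iff_lt.1 hx, rfl⟩
      · obtain ⟨c, rfl⟩ := (hc x).2 hr
        exact Or.inl ⟨c, hx, rfl⟩
    · rintro (⟨c, h, rfl⟩ | ⟨b, h, rfl⟩)
      · exact h
      · exact hI h
  have hD : Disjoint ((Finset.univ.filter fun c => Ic c < I a).image Ic)
      ((Finset.Iio a).image I) := by
    rw [Finset.disjoint_left]
    intro x hx hy
    obtain ⟨c, -, rfl⟩ := Finset.mem_image.1 hx
    obtain ⟨b, -, hb⟩ := Finset.mem_image.1 hy
    exact (hc _).1 ⟨c, rfl⟩ ⟨b, hb⟩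
  have := congrArg Finset.card hU
  rw [Finset.card_union_of_disjoint hD, Finset.card_image_of_injective _ hIc.injective,
    Finset.card_image_of_injective _ hI.injective, Fin.card_Iio, Fin.card_Iio] at this
  exact this.symm

/-- The sign of the shuffle listing `I` and then `Ic`: its inversions are the pairs `(a, c)` with
`Ic c < I a`, of which there are `I a - a` for each `a`. The sum of the `a` is kept on the left to
avoid truncated subtraction. -/
lemma sign_shuffle {k m : ℕ} {I : Fin k → Fin (k + m)} {Ic : Fin m → Fin (k + m)}
    (hI : StrictMono I) (hIc : StrictMono Ic)
    (hc : ∀ x, x ∈ Set.range Ic ↔ x ∉ Set.range I) (σ : Perm (Fin (k + m)))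
    (h1 : ∀ a, σ (Fin.castAdd m a) = I a) (h2 : ∀ c, σ (Fin.natAdd k c) = Ic c) :
    Perm.sign σ * (-1) ^ (∑ a : Fin k, (a : ℕ)) = (-1) ^ (∑ a : Fin k, (I a : ℕ)) := by
  have hs : Perm.sign σ
      = ∏ a : Fin k, (-1 : ℤˣ) ^ (Finset.univ.filter fun c => Ic c < I a).card := by
    rw [Perm.sign_eq_prod_prod_Ioi]
    have hIoi : ∀ i : Fin (k + m), Finset.Ioi i = Finset.univ.filter fun j => i < j := by
      intro i; ext j; simp
    simp only [hIoi, Finset.prod_filter, Fin.prod_univ_add, h1, h2]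
    have e1 : ∀ a b : Fin k, (if Fin.castAdd m a < Fin.castAdd m b then
        (if I a < I b then (1 : ℤˣ) else -1) else 1) = 1 := by
      intro a b
      split_ifs with h h'
      · rfl
      · exact absurd (hI (show a < b from h)) h'
      · rfl
    have e2 : ∀ c d : Fin m, (if Fin.natAdd k c < Fin.natAdd k d then
        (if Ic c < Ic d then (1 : ℤˣ) else -1) else 1) = 1 := by
      intro c d
      split_ifs with h h'
      · rfl
      · exact absurd (hIc ((Fin.natAdd_lt_natAdd_iff k).1 h)) h'
      · rfl
    have e3 : ∀ (c : Fin m) (a : Fin k), ¬ Fin.natAdd k c < Fin.castAdd m a := by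
      intro c a h
      simp only [Fin.lt_def, Fin.val_natAdd, Fin.val_castAdd] at h
      omega
    have e4 : ∀ (c : Fin m) (a : Fin k), Fin.castAdd m a < Fin.natAdd k c := by
      intro c a
      simp only [Fin.lt_def, Fin.val_natAdd, Fin.val_castAdd]
      omega
    simp only [e1, e2, e3, e4, if_true, if_false, Finset.prod_const_one, one_mul, mul_one]
    refine Finset.prod_congr rfl fun a _ => ?_
    rw [← Finset.prod_const, Finset.prod_filter]
    refine Finset.prod_congr rfl fun c _ => ?_
    have hne : I a ≠ Ic c := fun h => (hc (Ic c)).1 ⟨c, rfl⟩ ⟨a, h⟩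
    rcases lt_or_gt_of_ne hne with h | h
    · rw [if_pos h, if_neg h.not_gt]
    · rw [if_neg h.not_gt, if_pos h]
  rw [hs, ← Finset.prod_pow_eq_pow_sum, ← Finset.prod_pow_eq_pow_sum, ← Finset.prod_mul_distrib]
  refine Finset.prod_congr rfl fun a _ => ?_
  rw [← pow_add, card_filter_lt_add hI hIc hc]

/-- The bijection listing the values of `I` and then those of the complementary map `Ic`. -/
noncomputable def sumComplEquiv {n k m : ℕ} (I : Fin k → Fin n) (Ic : Fin m → Fin n)
    (hI : StrictMono I) (hIc : StrictMono Ic)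
    (hc : ∀ x, x ∈ Set.range Ic ↔ x ∉ Set.range I) : Fin k ⊕ Fin m ≃ Fin n :=
  Equiv.ofBijective (Sum.elim I Ic) <| by
    constructor
    · exact hI.injective.sumElim hIc.injective fun a c h => (hc (Ic c)).1 ⟨c, rfl⟩ ⟨a, h⟩
    · intro x
      by_cases hx : x ∈ Set.range I
      · obtain ⟨a, rfl⟩ := hx
        exact ⟨Sum.inl a, rfl⟩
      · obtain ⟨c, rfl⟩ := (hc x).2 hx
        exact ⟨Sum.inr c, rfl⟩

/-- The complementary-minor identity with the size `m` of the complement as a free variable. -/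
lemma jacobi_complementary_minor_add {K : Type*} [Field K] {n k m : ℕ} (hn : k + m = n)
    (A : Matrix (Fin n) (Fin n) K) (hA : IsUnit A.det)
    (I J : Fin k → Fin n) (hI : StrictMono I) (hJ : StrictMono J)
    (Ic Jc : Fin m → Fin n) (hIc : StrictMono Ic) (hJc : StrictMono Jc)
    (hIcompl : ∀ x : Fin n, x ∈ Set.range Ic ↔ x ∉ Set.range I)
    (hJcompl : ∀ x : Fin n, x ∈ Set.range Jc ↔ x ∉ Set.range J) :
    A.det * ((A⁻¹).submatrix Jc Ic).det
      = (-1 : K) ^ ((∑ a : Fin k, (I a : ℕ)) + ∑ a : Fin k, (J a : ℕ))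
        * (A.submatrix I J).det := by
  subst hn
  let eI := sumComplEquiv I Ic hI hIc hIcompl
  let eJ := sumComplEquiv J Jc hJ hJc hJcompl
  let σ : Perm (Fin (k + m)) := finSumFinEquiv.symm.trans eI
  let τ : Perm (Fin (k + m)) := finSumFinEquiv.symm.trans eJ
  have hσ := sign_shuffle hI hIc hIcompl σ (fun a => by simp [σ, eI]; rfl)
    (fun c => by simp [σ, eI]; rfl)
  have hτ := sign_shuffle hJ hJc hJcompl τ (fun a => by simp [τ, eJ]; rfl)
    (fun c => by simp [τ, eJ]; rfl)
  have hsign : Perm.sign σ * Perm.sign τ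
      = (-1) ^ ((∑ a : Fin k, (I a : ℕ)) + ∑ a : Fin k, (J a : ℕ)) := by
    rw [pow_add, ← hσ, ← hτ, mul_mul_mul_comm, Int.units_mul_self, mul_one]
  have hblock := det_mul_det_toBlocks₂₂ (A.submatrix eI eJ) (A⁻¹.submatrix eJ eI) (by
    rw [submatrix_mul_equiv, Matrix.mul_nonsing_inv A hA, submatrix_one_equiv])
  have hdet : (A.submatrix eI eJ).det = ((Perm.sign σ * Perm.sign τ : ℤˣ) : ℤ) * A.det := by
    have h : A.submatrix eI eJ
        = ((A.submatrix σ id).submatrix id τ).submatrix finSumFinEquiv finSumFinEquiv := by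
      ext x y
      simp [σ, τ]
    rw [h, det_submatrix_equiv_self, det_permute', det_permute]
    push_cast
    ring
  have h11 : (A.submatrix eI eJ).toBlocks₁₁ = A.submatrix I J := rfl
  have h22 : (A⁻¹.submatrix eJ eI).toBlocks₂₂ = A⁻¹.submatrix Jc Ic := rfl
  rw [h11, h22, hdet, hsign] at hblock
  push_cast at hblock
  rw [← hblock, ← mul_assoc, ← mul_assoc, ← mul_pow, neg_one_mul, neg_neg, one_pow, one_mul]

/-- **Jacobi's complementary-minor identity.**
For an invertible `n × n` matrix `A` over a field, a `k × k` minor of `A` (rows `I`, columns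
`J`, both strictly monotone) is related to the complementary `(n−k) × (n−k)` minor of `A⁻¹`
(rows `Jᶜ`, columns `Iᶜ`, the strictly monotone enumerations of the complementary index
sets) by `det A · det (A⁻¹[Jᶜ, Iᶜ]) = (−1)^{Σ I + Σ J} · det (A[I, J])`. -/
theorem jacobi_complementary_minor {K : Type*} [Field K] {n k : ℕ} (hk : k ≤ n)
    (A : Matrix (Fin n) (Fin n) K) (hA : IsUnit A.det)
    (I J : Fin k → Fin n) (hI : StrictMono I) (hJ : StrictMono J)
    (Ic Jc : Fin (n - k) → Fin n) (hIc : StrictMono Ic) (hJc : StrictMono Jc)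
    (hIcompl : ∀ x : Fin n, x ∈ Set.range Ic ↔ x ∉ Set.range I)
    (hJcompl : ∀ x : Fin n, x ∈ Set.range Jc ↔ x ∉ Set.range J) :
    A.det * ((A⁻¹).submatrix Jc Ic).det
      = (-1 : K) ^ ((∑ a : Fin k, (I a : ℕ)) + ∑ a : Fin k, (J a : ℕ))
        * (A.submatrix I J).det := by
  exact jacobi_complementary_minor_add (Nat.add_sub_cancel' hk) A hA I J hI hJ Ic Jc hIc hJc
    hIcompl hJcompl
end

section
/- Let A : Matrix (Fin n) (Fin n) ℝ be a real orthogonal matrix (Aᵀ * A = 1) with det A = 1, let 0 ≤ k ≤ n, and let I, J : Fin k → Fin n be strictly monotone maps with strictly monotone complementary enumerations Iᶜ, Jᶜ : Fin (n−k) → Fin n (enumerating, in increasing order, the indices not in the range of I, resp. J). Then det (A.submatrix Iᶜ Jᶜ) = (−1)^{Σ_{a} I a + Σ_{a} J a} · det (A.submatrix I J), where the sums are over the natural-number values of the entries of I and J. -/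
/-!
Listing the rows of `A` in the order `I, Iᶜ` and the columns in the order `J, Jᶜ` gives a block
matrix `B = [P Q; R S]` with `P`, `S` the two minors in question. Since `B` is again orthogonal,
`B * [1 Rᵀ; 0 Sᵀ] = [P 0; R 1]`, so `det B * det S = det P`: Jacobi's complementary minor identity.

As `det A = 1`, `det B` is the sign of the permutation carrying the order `J, Jᶜ` to `I, Iᶜ`.
That sign is `(-1)^(Σ I + Σ J)` (`shuffle_sign`): unless the occupied set is an initial segment,
some occupied `i + 1` has `i` unoccupied, and the adjacent transposition exchanging them preserves
both increasing enumerations, flips the sign and lowers the sum by one (`shuffle_step`). When both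
occupied sets are initial segments they coincide, and the permutation is the identity.
-/

/-- An enumeration of `Fin n` that is increasing on each of two blocks, i.e. a `(k, m)`-shuffle. -/
def IsShuffle {k m n : ℕ} (e : Fin k ⊕ Fin m ≃ Fin n) : Prop :=
  StrictMono (fun a => e (Sum.inl a)) ∧ StrictMono (fun b => e (Sum.inr b))

lemma exists_gap {n : ℕ} {R : Set (Fin n)} (hR : ¬ IsLowerSet R) :
    ∃ i j : Fin n, (j : ℕ) = i + 1 ∧ j ∈ R ∧ i ∉ R := by
  by_contra! hcon
  apply hR
  have key : ∀ d : ℕ, ∀ x y : Fin n, (y : ℕ) = x + d → y ∈ R → x ∈ R := by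
    intro d
    induction d with
    | zero =>
      intro x y hxy hy
      have : x = y := Fin.ext (by omega)
      exact this ▸ hy
    | succ d ih =>
      intro x y hxy hy
      have hlt : (x : ℕ) + d < n := by have := y.isLt; omega
      exact ih x ⟨x + d, hlt⟩ rfl (hcon _ y (by simp only; omega) hy)
  intro y x hxy hy
  have hle : (x : ℕ) ≤ y := hxy
  exact key (y - x) x y (by omega) hy

/-- An adjacent transposition keeps a function increasing if its range misses one of the two
exchanged points. -/
lemma strictMono_swap {k n : ℕ} {f : Fin k → Fin n} (hf : StrictMono f) {i j : Fin n}
    (hij : (j : ℕ) = i + 1) (hmiss : i ∉ Set.range f ∨ j ∉ Set.range f) :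
    StrictMono (fun a => Equiv.swap i j (f a)) := by
  intro a b hab
  have h := hf hab
  have hm : (f a ≠ i ∧ f b ≠ i) ∨ (f a ≠ j ∧ f b ≠ j) := by
    rcases hmiss with h | h
    · exact Or.inl ⟨fun h' => h ⟨a, h'⟩, fun h' => h ⟨b, h'⟩⟩
    · exact Or.inr ⟨fun h' => h ⟨a, h'⟩, fun h' => h ⟨b, h'⟩⟩
  simp only [Equiv.swap_apply_def]
  simp only [Fin.lt_def, Fin.ext_iff, ne_eq] at *
  split_ifs <;> omega

lemma shuffle_step {k m n : ℕ} {e : Fin k ⊕ Fin m ≃ Fin n} (he : IsShuffle e)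
    (hlow : ¬ IsLowerSet (Set.range fun a => e (Sum.inl a))) :
    ∃ s : Equiv.Perm (Fin n), Equiv.Perm.sign s = -1 ∧ IsShuffle (e.trans s) ∧
      ∑ a, (e (Sum.inl a) : ℕ) = ∑ a, ((e.trans s) (Sum.inl a) : ℕ) + 1 := by
  obtain ⟨i, j, hij, ⟨a₀, ha₀⟩, hi⟩ := exists_gap hlow
  simp only at ha₀
  have hne : i ≠ j := fun h => by have := congrArg Fin.val h; omega
  refine ⟨Equiv.swap i j, Equiv.Perm.sign_swap hne,
    ⟨strictMono_swap he.1 hij (Or.inl hi), strictMono_swap he.2 hij (Or.inr ?_)⟩, ?_⟩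
  · rintro ⟨b, hb⟩
    have := e.injective (hb.trans ha₀.symm)
    simp at this
  · have hpt : ∀ a, (e (Sum.inl a) : ℕ)
        = ((e.trans (Equiv.swap i j)) (Sum.inl a) : ℕ) + if a = a₀ then 1 else 0 := by
      intro a
      by_cases h : a = a₀
      · subst h
        simp [ha₀, hij]
      · have h1 : e (Sum.inl a) ≠ j := fun h' => h (by simpa using e.injective (h'.trans ha₀.symm))
        have h2 : e (Sum.inl a) ≠ i := fun h' => hi ⟨a, h'⟩
        simp [h, Equiv.swap_apply_of_ne_of_ne h2 h1]
    rw [Finset.sum_congr rfl fun a _ => hpt a, Finset.sum_add_distrib]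
    simp

/-- A shuffle is determined by the set of values on its first block. -/
lemma shuffle_ext {k m n : ℕ} {e f : Fin k ⊕ Fin m ≃ Fin n} (he : IsShuffle e) (hf : IsShuffle f)
    (h : (Set.range fun a => e (Sum.inl a)) = Set.range fun a => f (Sum.inl a)) : e = f := by
  have compl : ∀ g : Fin k ⊕ Fin m ≃ Fin n,
      (Set.range fun b => g (Sum.inr b)) = (Set.range fun a => g (Sum.inl a))ᶜ := by
    intro g
    ext x
    obtain ⟨y, rfl⟩ := g.surjective x
    cases y <;> simp
  have h1 := (StrictMono.range_inj he.1 hf.1).1 h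
  have h2 := (StrictMono.range_inj he.2 hf.2).1 (by rw [compl, compl, h])
  ext x
  cases x with
  | inl a => exact congrArg Fin.val (congrFun h1 a)
  | inr b => exact congrArg Fin.val (congrFun h2 b)

/-- Initial segments of `Fin n` of equal size coincide. -/
lemma range_eq_of_isLowerSet {k n : ℕ} {f g : Fin k → Fin n} (hf : Function.Injective f)
    (hg : Function.Injective g) (hlf : IsLowerSet (Set.range f)) (hlg : IsLowerSet (Set.range g)) :
    Set.range f = Set.range g := by
  have hc : (Set.range f).ncard = (Set.range g).ncard := by
    rw [← Set.image_univ, ← Set.image_univ, Set.ncard_image_of_injective _ hf,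
      Set.ncard_image_of_injective _ hg]
  rcases hlf.total hlg with h | h
  · exact Set.eq_of_subset_of_ncard_le h hc.ge
  · exact (Set.eq_of_subset_of_ncard_le h hc.le).symm

lemma shuffle_sign {k m n : ℕ} (e f : Fin k ⊕ Fin m ≃ Fin n) (he : IsShuffle e)
    (hf : IsShuffle f) :
    Equiv.Perm.sign (f.symm.trans e)
      = (-1) ^ (∑ a, (e (Sum.inl a) : ℕ) + ∑ a, (f (Sum.inl a) : ℕ)) := by
  induction hN : ∑ a, (e (Sum.inl a) : ℕ) + ∑ a, (f (Sum.inl a) : ℕ)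
    using Nat.strong_induction_on generalizing e f with
  | _ N ih =>
  by_cases hle : IsLowerSet (Set.range fun a => e (Sum.inl a))
  · by_cases hlf : IsLowerSet (Set.range fun a => f (Sum.inl a))
    · obtain rfl := shuffle_ext he hf
        (range_eq_of_isLowerSet he.1.injective hf.1.injective hle hlf)
      rw [← hN, ← two_mul]
      simp
    · obtain ⟨s, hs, hsh, hsum⟩ := shuffle_step hf hlf
      have h := ih (N - 1) (by omega) e (f.trans s) he hsh (by omega)
      have hp : f.symm.trans e = s.trans ((f.trans s).symm.trans e) := by
        ext x; simp
      obtain ⟨M, rfl⟩ : ∃ M, N = M + 1 := ⟨N - 1, by omega⟩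
      rw [hp, Equiv.Perm.sign_trans, h, hs, pow_succ, Nat.add_sub_cancel]
  · obtain ⟨s, hs, hsh, hsum⟩ := shuffle_step he hle
    have h := ih (N - 1) (by omega) (e.trans s) f hsh hf (by omega)
    have hp : f.symm.trans (e.trans s) = (f.symm.trans e).trans s := rfl
    obtain ⟨M, rfl⟩ : ∃ M, N = M + 1 := ⟨N - 1, by omega⟩
    rw [hp, Equiv.Perm.sign_trans, hs, Nat.add_sub_cancel] at h
    rw [pow_succ, ← h]
    simp

/-- An increasing enumeration of a set and one of its complement combine into a shuffle. -/
lemma exists_shuffle {k m n : ℕ} {I : Fin k → Fin n} {Ic : Fin m → Fin n} (hI : StrictMono I)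
    (hIc : StrictMono Ic) (hcompl : ∀ x : Fin n, x ∈ Set.range Ic ↔ x ∉ Set.range I) :
    ∃ e : Fin k ⊕ Fin m ≃ Fin n, IsShuffle e ∧ ⇑e = Sum.elim I Ic := by
  have hbij : Function.Bijective (Sum.elim I Ic) := by
    constructor
    · exact hI.injective.sumElim hIc.injective
        fun a b h => (hcompl (Ic b)).1 ⟨b, rfl⟩ ⟨a, h⟩
    · intro x
      by_cases hx : x ∈ Set.range I
      · obtain ⟨a, rfl⟩ := hx
        exact ⟨Sum.inl a, rfl⟩
      · obtain ⟨b, rfl⟩ := (hcompl x).2 hx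
        exact ⟨Sum.inr b, rfl⟩
  exact ⟨Equiv.ofBijective _ hbij, ⟨hI, hIc⟩, rfl⟩

open Matrix in
/-- Jacobi's complementary minor identity for an orthogonal block matrix. -/
lemma det_toBlocks_of_orthogonal {p q : Type*} [Fintype p] [Fintype q] [DecidableEq p]
    [DecidableEq q] (B : Matrix (p ⊕ q) (p ⊕ q) ℝ) (hB : B * Bᵀ = 1) :
    B.det * B.toBlocks₂₂.det = B.toBlocks₁₁.det := by
  obtain ⟨P, Q, R, S, rfl⟩ : ∃ P Q R S, B = fromBlocks P Q R S :=
    ⟨_, _, _, _, (fromBlocks_toBlocks B).symm⟩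
  rw [fromBlocks_transpose, fromBlocks_multiply, ← fromBlocks_one, fromBlocks_inj] at hB
  obtain ⟨-, h12, -, h22⟩ := hB
  have hmul : fromBlocks P Q R S * fromBlocks 1 Rᵀ 0 Sᵀ = fromBlocks P 0 R 1 := by
    rw [fromBlocks_multiply, h12, h22]
    simp
  have hd := congrArg det hmul
  rw [det_mul, det_fromBlocks_zero₂₁, det_fromBlocks_zero₁₂] at hd
  simpa using hd

open Matrix in

/-- **Particle–hole symmetry of minors of a special orthogonal matrix.**
For a real orthogonal matrix `A` with `det A = 1`, the complementary minor on rows `Iᶜ` and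
columns `Jᶜ` equals, up to the sign `(−1)^{Σ I + Σ J}`, the minor on rows `I` and columns
`J`, where `I, J` are strictly monotone and `Iᶜ, Jᶜ` are the strictly monotone enumerations
of the complementary index sets. -/
theorem orthogonal_complementary_minor {n k : ℕ} (hk : k ≤ n)
    (A : Matrix (Fin n) (Fin n) ℝ) (hA : Aᵀ * A = 1) (hdet : A.det = 1)
    (I J : Fin k → Fin n) (hI : StrictMono I) (hJ : StrictMono J)
    (Ic Jc : Fin (n - k) → Fin n) (hIc : StrictMono Ic) (hJc : StrictMono Jc)
    (hIcompl : ∀ x : Fin n, x ∈ Set.range Ic ↔ x ∉ Set.range I)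
    (hJcompl : ∀ x : Fin n, x ∈ Set.range Jc ↔ x ∉ Set.range J) :
    (A.submatrix Ic Jc).det
      = (-1 : ℝ) ^ ((∑ a : Fin k, (I a : ℕ)) + ∑ a : Fin k, (J a : ℕ))
        * (A.submatrix I J).det := by
  obtain ⟨e, he, heI⟩ := exists_shuffle hI hIc hIcompl
  obtain ⟨f, hf, hfJ⟩ := exists_shuffle hJ hJc hJcompl
  have hB : A.submatrix e f * (A.submatrix e f)ᵀ = 1 := by
    rw [transpose_submatrix, submatrix_mul_equiv, mul_eq_one_comm.1 hA, submatrix_one_equiv]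
  have hjac := det_toBlocks_of_orthogonal _ hB
  have h11 : (A.submatrix e f).toBlocks₁₁ = A.submatrix I J := by
    ext a b
    simp [toBlocks₁₁, heI, hfJ]
  have h22 : (A.submatrix e f).toBlocks₂₂ = A.submatrix Ic Jc := by
    ext a b
    simp [toBlocks₂₂, heI, hfJ]
  have hdetB : (A.submatrix e f).det
      = (-1 : ℝ) ^ ((∑ a : Fin k, (I a : ℕ)) + ∑ a : Fin k, (J a : ℕ)) := by
    have hsub : A.submatrix e f = (A.submatrix (f.symm.trans e) id).submatrix f f := by
      ext a b
      simp
    rw [hsub, det_submatrix_equiv_self, det_permute, shuffle_sign e f he hf, hdet]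
    simp [heI, hfJ]
  rw [h11, h22, hdetB] at hjac
  rw [← hjac, ← mul_assoc, ← mul_pow]
  simp
end
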